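/- arXiv:2301.08502 — 2 statements merged into one kernel-verified Lean document; each statement's English description precedes it below -/
import Mathlib

section
/- Let P and P̂ be two dynamics, π_D and π two policies, ε_π := sup_{s∈S} D_TV(π_D(·|s), π(·|s)), and ε_t^m := E_{(s,a)∼ν_{t-1}^{π,P̂}}[D_TV(P̂(·|s,a), P(·|s,a))] for t ≥ 1. Writing C(P̂,π) := (2·R_max/(1−γ)²)·((2−γ)·ε_π + (1−γ)·Σ_{t=1}^∞ γ^t·ε_t^m), the true return is lower-bounded by the model return minus the error term: J_P(π) ≥ J_{P̂}(π) − C(P̂,π). -/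
open scoped ENNReal

noncomputable section

/-- Total variation distance between two probability mass functions on a countable type:
`D_TV(p, q) = (1/2) * Σ_x |p(x) - q(x)|`. -/
def tv {X : Type*} (p q : PMF X) : ℝ :=
  (1 / 2) * ∑' x : X, |(p x).toReal - (q x).toReal|

/-- The state-action distribution at time `t` under initial distribution `ρ0`, policy `π`
and dynamics `P`:  `ν_0(s,a) = ρ0(s)·π(a|s)` and
`ν_{t+1}(s',a') = Σ_{s,a} ν_t(s,a)·P(s'|s,a)·π(a'|s')`. -/
def nu {S A : Type*} (ρ0 : PMF S) (π : S → PMF A) (P : S × A → PMF S) : ℕ → PMF (S × A)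
  | 0 => ρ0.bind fun s => (π s).map fun a => (s, a)
  | (t + 1) => (nu ρ0 π P t).bind fun sa =>
      (P sa).bind fun s' => (π s').map fun a' => (s', a')

/-- The discounted return `J_P(π) = Σ_{t=0}^∞ γ^t · E_{(s,a)∼ν_t^{π,P}}[R(s,a)]`. -/
def J {S A : Type*} (R : S × A → ℝ) (γ : ℝ) (ρ0 : PMF S) (π : S → PMF A)
    (P : S × A → PMF S) : ℝ :=
  ∑' t : ℕ, γ ^ t * ∑' sa : S × A, ((nu ρ0 π P t) sa).toReal * R sa

/-- Absolute difference in `ℝ≥0∞`. -/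
def eabs (a b : ℝ≥0∞) : ℝ≥0∞ := (a - b) + (b - a)

/-- The `ℓ¹` distance of two mass functions, in `ℝ≥0∞`. -/
def dd {X : Type*} (p q : PMF X) : ℝ≥0∞ := ∑' x, eabs (p x) (q x)

theorem eabs_le_add (a b : ℝ≥0∞) : eabs a b ≤ a + b :=
  add_le_add tsub_le_self tsub_le_self

theorem toReal_eabs {a b : ℝ≥0∞} (ha : a ≠ ∞) (hb : b ≠ ∞) :
    (eabs a b).toReal = |a.toReal - b.toReal| := by
  unfold eabs
  rcases le_total a b with h | h
  · rw [tsub_eq_zero_of_le h, zero_add, ENNReal.toReal_sub_of_le h hb, abs_sub_comm, abs_of_nonneg]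
    exact sub_nonneg.2 (ENNReal.toReal_mono hb h)
  · rw [tsub_eq_zero_of_le h, add_zero, ENNReal.toReal_sub_of_le h ha, abs_of_nonneg]
    exact sub_nonneg.2 (ENNReal.toReal_mono ha h)

theorem dd_le_two {X : Type*} (p q : PMF X) : dd p q ≤ 2 := by
  calc dd p q ≤ ∑' x, (p x + q x) := ENNReal.tsum_le_tsum fun x => eabs_le_add _ _
    _ = 2 := by rw [ENNReal.tsum_add, p.tsum_coe, q.tsum_coe]; norm_num

theorem dd_ne_top {X : Type*} (p q : PMF X) : dd p q ≠ ∞ :=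
  ne_top_of_le_ne_top (by norm_num) (dd_le_two p q)

theorem dd_self {X : Type*} (p : PMF X) : dd p p = 0 := by simp [dd, eabs]

theorem eabs_tsum_le {X : Type*} (f g : X → ℝ≥0∞) :
    eabs (∑' x, f x) (∑' x, g x) ≤ ∑' x, eabs (f x) (g x) := by
  have key : ∀ f g : X → ℝ≥0∞, (∑' x, f x) - (∑' x, g x) ≤ ∑' x, (f x - g x) := by
    intro f g
    rw [tsub_le_iff_right, ← ENNReal.tsum_add]
    exact ENNReal.tsum_le_tsum fun x => le_tsub_add
  unfold eabs
  rw [ENNReal.tsum_add]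
  exact add_le_add (key f g) (key g f)

theorem eabs_mul_le (p q f g : ℝ≥0∞) :
    eabs (p * f) (q * g) ≤ p * eabs f g + eabs p q * g := by
  have h1 : p * f - q * g ≤ p * (f - g) + (p - q) * g := by
    rw [tsub_le_iff_right]
    calc p * f ≤ p * ((f - g) + g) := by gcongr; exact le_tsub_add
      _ = p * (f - g) + p * g := mul_add _ _ _
      _ ≤ p * (f - g) + ((p - q) + q) * g := by gcongr; exact le_tsub_add
      _ = _ := by ring
  have h2 : q * g - p * f ≤ p * (g - f) + (q - p) * g := by
    rw [tsub_le_iff_right]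
    calc q * g ≤ ((q - p) + p) * g := by gcongr; exact le_tsub_add
      _ = (q - p) * g + p * g := add_mul _ _ _
      _ ≤ (q - p) * g + p * ((g - f) + f) := by gcongr; exact le_tsub_add
      _ = _ := by ring
  calc eabs (p * f) (q * g) ≤ _ := add_le_add h1 h2
    _ = _ := by unfold eabs; ring

theorem dd_bind_le {X Y : Type*} (p q : PMF X) (f g : X → PMF Y) :
    dd (p.bind f) (q.bind g) ≤ (∑' x, p x * dd (f x) (g x)) + dd p q := by
  calc dd (p.bind f) (q.bind g)
      = ∑' y, eabs (∑' x, p x * f x y) (∑' x, q x * g x y) := by simp [dd, PMF.bind_apply]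
    _ ≤ ∑' y, ∑' x, (p x * eabs (f x y) (g x y) + eabs (p x) (q x) * g x y) :=
        ENNReal.tsum_le_tsum fun y => (eabs_tsum_le _ _).trans
          (ENNReal.tsum_le_tsum fun x => eabs_mul_le _ _ _ _)
    _ = ∑' x, ∑' y, (p x * eabs (f x y) (g x y) + eabs (p x) (q x) * g x y) :=
        ENNReal.tsum_comm
    _ = _ := by
        simp only [ENNReal.tsum_add, ENNReal.tsum_mul_left, PMF.tsum_coe, mul_one, dd]

theorem toReal_dd {X : Type*} (p q : PMF X) :
    (dd p q).toReal = ∑' x, |(p x).toReal - (q x).toReal| := by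
  unfold dd
  rw [ENNReal.tsum_toReal_eq (ENNReal.ne_top_of_tsum_ne_top (dd_ne_top p q))]
  exact tsum_congr fun x => toReal_eabs (p.apply_ne_top x) (q.apply_ne_top x)

theorem tv_eq {X : Type*} (p q : PMF X) : tv p q = (1 / 2) * (dd p q).toReal := by
  rw [toReal_dd, tv]

theorem summable_abs_sub {X : Type*} (p q : PMF X) :
    Summable fun x => |(p x).toReal - (q x).toReal| := by
  have := ENNReal.summable_toReal (dd_ne_top p q)
  refine this.congr fun x => ?_
  exact toReal_eabs (p.apply_ne_top x) (q.apply_ne_top x)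

theorem summable_mul_R {X : Type*} (p : PMF X) (R : X → ℝ) (M : ℝ) (hR : ∀ x, |R x| ≤ M) :
    Summable fun x => (p x).toReal * R x := by
  have hs : Summable fun x => (p x).toReal := ENNReal.summable_toReal p.tsum_coe_ne_top
  refine Summable.of_norm_bounded (hs.mul_right M) fun x => ?_
  rw [Real.norm_eq_abs, abs_mul, abs_of_nonneg ENNReal.toReal_nonneg]
  exact mul_le_mul_of_nonneg_left (hR x) ENNReal.toReal_nonneg

theorem abs_exp_le {X : Type*} (p : PMF X) (R : X → ℝ) (M : ℝ) (hR : ∀ x, |R x| ≤ M) :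
    |∑' x, (p x).toReal * R x| ≤ M := by
  have hs : HasSum (fun x => (p x).toReal) 1 := by
    have := ENNReal.hasSum_toReal p.tsum_coe_ne_top
    rwa [← ENNReal.tsum_toReal_eq p.apply_ne_top, p.tsum_coe, ENNReal.toReal_one] at this
  have := tsum_of_norm_bounded (f := fun x => (p x).toReal * R x) (hs.mul_right M) fun x => by
    rw [Real.norm_eq_abs, abs_mul, abs_of_nonneg ENNReal.toReal_nonneg]
    exact mul_le_mul_of_nonneg_left (hR x) ENNReal.toReal_nonneg
  simpa using this

theorem exp_sub_le {X : Type*} (p q : PMF X) (R : X → ℝ) (M : ℝ) (hR : ∀ x, |R x| ≤ M) :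
    (∑' x, (p x).toReal * R x) - ∑' x, (q x).toReal * R x ≤ M * (dd p q).toReal := by
  rw [← (summable_mul_R p R M hR).tsum_sub (summable_mul_R q R M hR), toReal_dd, ← tsum_mul_left]
  refine ((summable_mul_R p R M hR).sub (summable_mul_R q R M hR)).tsum_le_tsum (fun x => ?_)
    ((summable_abs_sub p q).mul_left M)
  rw [← sub_mul, mul_comm M]
  calc _ ≤ |((p x).toReal - (q x).toReal) * R x| := le_abs_self _
    _ = |(p x).toReal - (q x).toReal| * |R x| := abs_mul _ _
    _ ≤ _ := mul_le_mul_of_nonneg_left (hR x) (abs_nonneg _)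

theorem dd_nu_succ {S A : Type*} (ρ0 : PMF S) (π : S → PMF A) (Phat P : S × A → PMF S) (t : ℕ) :
    dd (nu ρ0 π Phat (t + 1)) (nu ρ0 π P (t + 1)) ≤
      (∑' sa, nu ρ0 π Phat t sa * dd (Phat sa) (P sa)) +
        dd (nu ρ0 π Phat t) (nu ρ0 π P t) := by
  simp only [nu]
  refine (dd_bind_le _ _ _ _).trans ?_
  gcongr with sa
  refine (dd_bind_le _ _ _ _).trans ?_
  simp [dd_self]

/-- The true return is lower-bounded by the model return minus the error term
`C(P̂, π) = (2·R_max/(1-γ)²)·((2-γ)·ε_π + (1-γ)·Σ_{t≥1} γ^t·ε_t^m)`. -/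
theorem true_return_lower_bound {S A : Type*} [Countable S] [Countable A]
    (P Phat : S × A → PMF S) (πD π : S → PMF A)
    (R : S × A → ℝ) (Rmax : ℝ) (hR : ∀ sa : S × A, |R sa| ≤ Rmax)
    (γ : ℝ) (hγ0 : 0 ≤ γ) (hγ1 : γ < 1) (ρ0 : PMF S)
    (επ : ℝ) (hεπ : επ = ⨆ s : S, tv (πD s) (π s))
    (εm : ℕ → ℝ)
    (hεm : ∀ t : ℕ, εm (t + 1) =
      ∑' sa : S × A, ((nu ρ0 π Phat t) sa).toReal * tv (Phat sa) (P sa)) :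
    J R γ ρ0 π P ≥
      J R γ ρ0 π Phat -
        2 * Rmax / (1 - γ) ^ 2 *
          ((2 - γ) * επ + (1 - γ) * ∑' t : ℕ, γ ^ (t + 1) * εm (t + 1)) := by
  set d : ℕ → ℝ := fun t => (dd (nu ρ0 π Phat t) (nu ρ0 π P t)).toReal with hd
  have hd0 : d 0 = 0 := by simp [hd, nu, dd_self]
  have hdn : ∀ t, 0 ≤ d t := fun t => ENNReal.toReal_nonneg
  have hd2 : ∀ t, d t ≤ 2 := fun t =>
    ENNReal.toReal_le_of_le_ofReal (by norm_num) (by simpa using dd_le_two _ _)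
  have hSle : ∀ t, (∑' sa, nu ρ0 π Phat t sa * dd (Phat sa) (P sa)) ≤ 2 := by
    intro t
    calc (∑' sa, nu ρ0 π Phat t sa * dd (Phat sa) (P sa))
        ≤ ∑' sa, nu ρ0 π Phat t sa * 2 := by gcongr; exact dd_le_two _ _
      _ = 2 := by rw [ENNReal.tsum_mul_right, PMF.tsum_coe, one_mul]
  have hSt : ∀ t, (∑' sa, nu ρ0 π Phat t sa * dd (Phat sa) (P sa)) ≠ ∞ := fun t =>
    ne_top_of_le_ne_top (by norm_num) (hSle t)
  have hε : ∀ t, 2 * εm (t + 1) =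
      (∑' sa, nu ρ0 π Phat t sa * dd (Phat sa) (P sa)).toReal := by
    intro t
    rw [hεm, ENNReal.tsum_toReal_eq (ENNReal.ne_top_of_tsum_ne_top (hSt t)), ← tsum_mul_left]
    refine tsum_congr fun sa => ?_
    rw [tv_eq, ENNReal.toReal_mul]
    ring
  have hεn : ∀ t, 0 ≤ εm (t + 1) := fun t => by
    have := hε t
    have h0 := ENNReal.toReal_nonneg (a := ∑' sa, nu ρ0 π Phat t sa * dd (Phat sa) (P sa))
    linarith
  have hε1 : ∀ t, εm (t + 1) ≤ 1 := fun t => by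
    have := hε t
    have h0 : (∑' sa, nu ρ0 π Phat t sa * dd (Phat sa) (P sa)).toReal ≤ 2 :=
      ENNReal.toReal_le_of_le_ofReal (by norm_num) (by simpa using hSle t)
    linarith
  have hstep : ∀ t, d (t + 1) ≤ 2 * εm (t + 1) + d t := by
    intro t
    rw [hε, hd, ← ENNReal.toReal_add (hSt t) (dd_ne_top _ _)]
    exact ENNReal.toReal_mono (ENNReal.add_ne_top.2 ⟨hSt t, dd_ne_top _ _⟩)
      (dd_nu_succ ρ0 π Phat P t)
  have hgeo : Summable fun t : ℕ => γ ^ t := summable_geometric_of_lt_one hγ0 hγ1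
  have hbd : ∀ (f : ℕ → ℝ) (M : ℝ), (∀ t, |f t| ≤ M) → Summable fun t => γ ^ t * f t := by
    intro f M hf
    refine Summable.of_norm_bounded (hgeo.mul_right M) fun t => ?_
    rw [Real.norm_eq_abs, abs_mul, abs_of_nonneg (pow_nonneg hγ0 t)]
    exact mul_le_mul_of_nonneg_left (hf t) (pow_nonneg hγ0 t)
  have hsd : Summable fun t => γ ^ t * d t :=
    hbd d 2 fun t => by rw [abs_of_nonneg (hdn t)]; exact hd2 t
  have hsε : Summable fun t => γ ^ (t + 1) * εm (t + 1) := by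
    have := (hbd (fun t => εm (t + 1)) 1 fun t => by
      rw [abs_of_nonneg (hεn t)]; exact hε1 t).mul_left γ
    refine this.congr fun t => ?_
    ring
  set X := ∑' t, γ ^ t * d t with hX
  set E := ∑' t : ℕ, γ ^ (t + 1) * εm (t + 1) with hE
  have hXE : X ≤ 2 * E + γ * X := by
    have h1 : X = ∑' t, γ ^ (t + 1) * d (t + 1) := by
      rw [hX, hsd.tsum_eq_zero_add, hd0]; simp
    rw [h1]
    have h2 : 2 * E + γ * X = ∑' t, (2 * (γ ^ (t + 1) * εm (t + 1)) + γ * (γ ^ t * d t)) := by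
      rw [(hsε.mul_left 2).tsum_add (hsd.mul_left γ), tsum_mul_left, tsum_mul_left]
    rw [← h1, h2, h1]
    refine ((summable_nat_add_iff 1).2 hsd).tsum_le_tsum (fun t => ?_)
      ((hsε.mul_left 2).add (hsd.mul_left γ))
    have := mul_le_mul_of_nonneg_left (hstep t) (pow_nonneg hγ0 (t + 1))
    calc _ ≤ _ := this
      _ = _ := by ring
  have hJ : J R γ ρ0 π Phat - J R γ ρ0 π P ≤ Rmax * X := by
    have s1 := hbd _ Rmax fun t => abs_exp_le (nu ρ0 π Phat t) R Rmax hR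
    have s2 := hbd _ Rmax fun t => abs_exp_le (nu ρ0 π P t) R Rmax hR
    unfold J
    rw [← s1.tsum_sub s2, hX, ← tsum_mul_left]
    refine (s1.sub s2).tsum_le_tsum (fun t => ?_) (hsd.mul_left Rmax)
    rw [← mul_sub]
    calc _ ≤ γ ^ t * (Rmax * d t) := mul_le_mul_of_nonneg_left
          (exp_sub_le _ _ R Rmax hR) (pow_nonneg hγ0 t)
      _ = _ := by ring
  have hRm : 0 ≤ Rmax := by
    obtain ⟨sa, -⟩ := (nu ρ0 π P 0).support_nonempty
    exact (abs_nonneg _).trans (hR sa)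
  have hεπ0 : 0 ≤ επ := by
    rw [hεπ]
    refine Real.iSup_nonneg fun s => ?_
    rw [tv_eq]
    positivity
  have hg : 0 < 1 - γ := by linarith
  have hX2 : X ≤ 2 * E / (1 - γ) := by
    rw [le_div_iff₀ hg]; linarith
  have hfin : Rmax * X ≤ 2 * Rmax / (1 - γ) ^ 2 * ((2 - γ) * επ + (1 - γ) * E) := by
    have h1 : 0 ≤ 2 * Rmax / (1 - γ) ^ 2 * ((2 - γ) * επ) := by
      have : 0 ≤ 2 - γ := by linarith
      positivity
    have h2 : 2 * Rmax / (1 - γ) ^ 2 * ((1 - γ) * E) = Rmax * (2 * E / (1 - γ)) := by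
      field_simp
    rw [mul_add, h2]
    have := mul_le_mul_of_nonneg_left hX2 hRm
    linarith
  linarith
end
end

section
/- (One-step total-variation recursion for Markov kernels.) Let X and Y be countable types, let μ₁, μ₂ be probability mass functions on X, and let K₁, K₂ : X → PMF(Y) be two transition kernels. Then the total variation distance between the induced next-step distributions satisfies D_TV(μ₁.bind K₁, μ₂.bind K₂) ≤ D_TV(μ₁, μ₂) + E_{x∼μ₁}[D_TV(K₁(x), K₂(x))], where (μ.bind K)(y) = Σ_x μ(x)·K(x)(y). -/
open scoped ENNReal

noncomputable section

theorem pmf_hasSum {X : Type*} (p : PMF X) : HasSum (fun x => (p x).toReal) 1 := by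
  have h := ENNReal.hasSum_toReal (f := fun x => p x) (by rw [p.tsum_coe]; simp)
  rw [← ENNReal.tsum_toReal_eq (fun x => p.apply_ne_top x), p.tsum_coe] at h
  simpa using h

theorem pmf_abs_summable {X : Type*} (p q : PMF X) :
    Summable (fun x => |(p x).toReal - (q x).toReal|) :=
  ((pmf_hasSum p).summable.sub (pmf_hasSum q).summable).abs

theorem pmf_abs_le {X : Type*} (p q : PMF X) :
    ∑' x, |(p x).toReal - (q x).toReal| ≤ 2 := by
  have h := (pmf_hasSum p).add (pmf_hasSum q)
  have h2 := (pmf_abs_summable p q).tsum_le_tsum (g := fun x => (p x).toReal + (q x).toReal)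
    (fun x => by
      have h1 : 0 ≤ (p x).toReal := ENNReal.toReal_nonneg
      have h2 : 0 ≤ (q x).toReal := ENNReal.toReal_nonneg
      rw [abs_le]; constructor <;> linarith) h.summable
  rw [h.tsum_eq] at h2
  linarith

theorem pmf_bind_hasSum {X Y : Type*} (μ : PMF X) (K : X → PMF Y) (y : Y) :
    HasSum (fun x => (μ x).toReal * (K x y).toReal) ((μ.bind K) y).toReal := by
  have hne : ∑' x, μ x * K x y ≠ ⊤ := by
    rw [← PMF.bind_apply]; exact PMF.apply_ne_top _ _
  have h := ENNReal.hasSum_toReal (f := fun x => μ x * K x y) hne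
  rw [← ENNReal.tsum_toReal_eq
    (fun x => ENNReal.mul_ne_top (μ.apply_ne_top x) ((K x).apply_ne_top y)),
    ← PMF.bind_apply] at h
  simpa only [ENNReal.toReal_mul] using h

/-- **One-step total-variation recursion for Markov kernels.**
`D_TV(μ₁K₁, μ₂K₂) ≤ D_TV(μ₁, μ₂) + E_{x∼μ₁}[D_TV(K₁(x), K₂(x))]`. -/
theorem tv_bind_le {X Y : Type*} [Countable X] [Countable Y]
    (μ₁ μ₂ : PMF X) (K₁ K₂ : X → PMF Y) :
    tv (μ₁.bind K₁) (μ₂.bind K₂) ≤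
      tv μ₁ μ₂ + ∑' x : X, (μ₁ x).toReal * tv (K₁ x) (K₂ x) := by
  have hrow : ∀ x, HasSum (fun y => |(μ₁ x).toReal - (μ₂ x).toReal| * (K₂ x y).toReal
      + (μ₁ x).toReal * |(K₁ x y).toReal - (K₂ x y).toReal|)
      (|(μ₁ x).toReal - (μ₂ x).toReal| + (μ₁ x).toReal * (2 * tv (K₁ x) (K₂ x))) := by
    intro x
    have h1 := (pmf_hasSum (K₂ x)).mul_left |(μ₁ x).toReal - (μ₂ x).toReal|
    have h2 := (pmf_abs_summable (K₁ x) (K₂ x)).hasSum.mul_left (μ₁ x).toReal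
    have h3 := h1.add h2
    have e : |(μ₁ x).toReal - (μ₂ x).toReal| + (μ₁ x).toReal * (2 * tv (K₁ x) (K₂ x))
        = |(μ₁ x).toReal - (μ₂ x).toReal| * 1
          + (μ₁ x).toReal * ∑' y, |(K₁ x y).toReal - (K₂ x y).toReal| := by
      unfold tv
      ring
    rw [e]
    exact h3
  have htv : ∀ x, 0 ≤ tv (K₁ x) (K₂ x) ∧ tv (K₁ x) (K₂ x) ≤ 1 := by
    intro x
    have h1 := pmf_abs_le (K₁ x) (K₂ x)
    have h2 : 0 ≤ ∑' y, |(K₁ x y).toReal - (K₂ x y).toReal| :=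
      tsum_nonneg (fun y => abs_nonneg _)
    unfold tv
    constructor <;> linarith
  have hE : Summable (fun x => (μ₁ x).toReal * tv (K₁ x) (K₂ x)) :=
    Summable.of_nonneg_of_le (fun x => mul_nonneg ENNReal.toReal_nonneg (htv x).1)
      (fun x => mul_le_of_le_one_right ENNReal.toReal_nonneg (htv x).2) (pmf_hasSum μ₁).summable
  have htot : HasSum (fun x => |(μ₁ x).toReal - (μ₂ x).toReal|
      + (μ₁ x).toReal * (2 * tv (K₁ x) (K₂ x)))
      (2 * (tv μ₁ μ₂ + ∑' x : X, (μ₁ x).toReal * tv (K₁ x) (K₂ x))) := by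
    convert (pmf_abs_summable μ₁ μ₂).hasSum.add (hE.hasSum.mul_left 2) using 1
    · funext x; ring
    · unfold tv; ring
  let F : X × Y → ℝ := fun z => |(μ₁ z.1).toReal - (μ₂ z.1).toReal| * (K₂ z.1 z.2).toReal
      + (μ₁ z.1).toReal * |(K₁ z.1 z.2).toReal - (K₂ z.1 z.2).toReal|
  have hF0 : 0 ≤ F := fun z => by
    have h1 : 0 ≤ (K₂ z.1 z.2).toReal := ENNReal.toReal_nonneg
    have h2 : 0 ≤ (μ₁ z.1).toReal := ENNReal.toReal_nonneg
    simp only [F, Pi.zero_apply]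
    positivity
  have hF : Summable F := by
    rw [summable_prod_of_nonneg hF0]
    refine ⟨fun x => (hrow x).summable, ?_⟩
    exact htot.summable.congr (fun x => (hrow x).tsum_eq.symm)
  have hFs : ∑' z, F z = 2 * (tv μ₁ μ₂ + ∑' x : X, (μ₁ x).toReal * tv (K₁ x) (K₂ x)) := by
    rw [hF.tsum_prod, ← htot.tsum_eq]
    exact tsum_congr (fun x => (hrow x).tsum_eq)
  have hFswap : Summable (fun w : Y × X => F (w.2, w.1)) := hF.prod_symm
  have hFs' : ∑' z, F z = ∑' y, ∑' x, F (x, y) := by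
    rw [← (Equiv.prodComm Y X).tsum_eq F]
    exact hFswap.tsum_prod
  have hpt : ∀ y, |((μ₁.bind K₁) y).toReal - ((μ₂.bind K₂) y).toReal| ≤ ∑' x, F (x, y) := by
    intro y
    have h := (pmf_bind_hasSum μ₁ K₁ y).sub (pmf_bind_hasSum μ₂ K₂ y)
    rw [← h.tsum_eq, ← Real.norm_eq_abs]
    refine tsum_of_norm_bounded (hFswap.prod_factor y).hasSum (fun x => ?_)
    have h2 : 0 ≤ (K₂ x y).toReal := ENNReal.toReal_nonneg
    have h1 : 0 ≤ (μ₁ x).toReal := ENNReal.toReal_nonneg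
    have e : (μ₁ x).toReal * (K₁ x y).toReal - (μ₂ x).toReal * (K₂ x y).toReal
        = ((μ₁ x).toReal - (μ₂ x).toReal) * (K₂ x y).toReal
          + (μ₁ x).toReal * ((K₁ x y).toReal - (K₂ x y).toReal) := by ring
    rw [e, Real.norm_eq_abs]
    refine (abs_add_le _ _).trans (le_of_eq ?_)
    rw [abs_mul, abs_mul, abs_of_nonneg h2, abs_of_nonneg h1]
  have hfin := (pmf_abs_summable (μ₁.bind K₁) (μ₂.bind K₂)).tsum_le_tsum hpt hFswap.prod
  rw [← hFs', hFs] at hfin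
  have e : tv (μ₁.bind K₁) (μ₂.bind K₂)
      = 1 / 2 * ∑' y, |((μ₁.bind K₁) y).toReal - ((μ₂.bind K₂) y).toReal| := rfl
  rw [e]
  linarith
end
end
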